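/- arXiv:2209.02657 — 2 statements merged into one kernel-verified Lean document; each statement's English description precedes it below -/
import Mathlib

section
/- Let n ≥ 1 and let Σ be a nonempty family of hyperplanes of PG(2n+1,q) satisfying property (P1^+). Then |Σ| = q^n(q^{n+1} − 1); consequently the number of black points is (q^{n+1}−1)(q^n+1)/(q−1), and every hyperplane of Σ contains exactly (q^{2n}−1)/(q−1) black points. -/
/-!
Let `Q = qⁿ`, let `k = |Σ|`, and let `deg p` be the number of members of `Σ` through a point `p`.
Two distinct hyperplanes always meet in codimension 2, so double counting of incidences gives
`∑ deg p` and `∑ (deg p)²` over all points as polynomials in `k`. As `deg` takes only the values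
`Q(Q - 1)` and `Q²`, the sum of `(deg p - Q(Q - 1)) (deg p - Q²)` vanishes, which is a quadratic
equation for `k`. One root is `Q(qQ - 1)`; an integer `k` equal to the other one would make `Q + 1`
divide `q - 1`. The black points inside a subspace `W` are then counted by the sum of
`deg p` over the points of `W`.
-/

open Finset Module

lemma sum_const_sub_of_eq_or_eq {ι R : Type*} [Ring R] [DecidableEq R] {s : Finset ι} {f : ι → R}
    {a c : R} (hf : ∀ i ∈ s, f i = a ∨ f i = c) :
    ∑ i ∈ s, (c - f i) = #{i ∈ s | f i = a} * (c - a) := by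
  rw [← nsmul_eq_mul, ← sum_const, sum_filter]
  refine sum_congr rfl fun i hi => ?_
  split_ifs with h
  · rw [h]
  · rw [(hf i hi).resolve_left h, sub_self]

lemma eq_of_card_quadratic {q Q k : ℤ} (hq : 1 < q) (hqQ : q ≤ Q)
    (h : k * ((q * Q ^ 2 - 1) + (k - 1) * (Q ^ 2 - 1))
      - (Q * (Q - 1) + Q ^ 2) * (k * (q * Q ^ 2 - 1))
      + Q * (Q - 1) * Q ^ 2 * (q ^ 2 * Q ^ 2 - 1) = 0) :
    k = Q * (q * Q - 1) := by
  have factored :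
      (k - Q * (q * Q - 1)) * ((Q - 1) * ((Q + 1) * k - Q ^ 2 * (q * Q + 1))) = 0 := by
    linear_combination h
  have second_ne : (Q + 1) * k - Q ^ 2 * (q * Q + 1) ≠ 0 := by
    intro second
    have hdvd : Q + 1 ∣ q - 1 :=
      ⟨Q ^ 2 * q - (q - 1) * (Q - 1) - k, by linear_combination second⟩
    have := Int.le_of_dvd (by lia) hdvd
    lia
  have hQ : Q - 1 ≠ 0 := by lia
  exact sub_eq_zero.1 ((mul_eq_zero.1 factored).resolve_right (mul_ne_zero hQ second_ne))

lemma eq_div_sub_one_of_cast_mul_eq {q x y : ℕ} (hq : 1 < q) (h : (x * (q - 1) : ℤ) = y) :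
    x = y / (q - 1) := by
  refine Nat.eq_div_of_mul_eq_left (by lia) ?_
  zify [hq.le]
  exact h

section Points

variable {F V : Type*} [Field F] [AddCommGroup V] [Module F V]

lemma finrank_inf_of_hyperplanes [FiniteDimensional F V] {m : ℕ} (hV : finrank F V = m + 2)
    {π σ : Submodule F V} (hπ : finrank F π = m + 1) (hσ : finrank F σ = m + 1) (hne : π ≠ σ) :
    finrank F ↥(π ⊓ σ) = m := by
  have hlt : π < π ⊔ σ := left_lt_sup.2 fun hle =>
    hne (Submodule.eq_of_le_of_finrank_eq hle (hσ.trans hπ.symm)).symm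
  have hsup := Submodule.finrank_lt_finrank_of_lt hlt
  have hsup_le := Submodule.finrank_le (π ⊔ σ)
  have hadd := Submodule.finrank_sup_add_finrank_inf_eq π σ
  lia

open scoped Classical in
/-- The number of members of the family `T` of subspaces that contain `p`. It is meant for points
`p` but defined for every subspace. -/
noncomputable def pointDegree (T : Finset (Submodule F V)) (p : Submodule F V) : ℕ :=
  #{σ ∈ T | p ≤ σ}

lemma ncard_setOf_le_eq_pointDegree (T : Finset (Submodule F V)) (p : Submodule F V) :
    {σ ∈ (T : Set (Submodule F V)) | p ≤ σ}.ncard = pointDegree T p := by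
  classical
  rw [pointDegree, ← Set.ncard_coe_finset, coe_filter]
  rfl

variable [Finite V]

/-- The points of the projective space of `V` contained in the subspace `W`, a point being a
subspace of rank one. -/
noncomputable def projPoints (W : Submodule F V) : Finset (Submodule F V) :=
  (Set.toFinite {p : Submodule F V | finrank F p = 1 ∧ p ≤ W}).toFinset

@[simp]
lemma mem_projPoints {W p : Submodule F V} : p ∈ projPoints W ↔ finrank F p = 1 ∧ p ≤ W := by
  simp [projPoints]

lemma projPoints_subset_top (W : Submodule F V) : projPoints W ⊆ projPoints ⊤ :=
  fun _ hp => mem_projPoints.2 ⟨(mem_projPoints.1 hp).1, le_top⟩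

open scoped Classical in
lemma filter_le_projPoints (W σ : Submodule F V) :
    {p ∈ projPoints W | p ≤ σ} = projPoints (W ⊓ σ) := by
  ext p
  simp only [mem_filter, mem_projPoints, le_inf_iff, and_assoc]

lemma card_projPoints_eq_card_projectivization (W : Submodule F V) :
    #(projPoints W) = Nat.card (Projectivization F W) := by
  have rank_one_iff (p : Submodule F W) : finrank F p = 1 ↔ finrank F (W.mapIic p).1 = 1 := by
    rw [Submodule.coe_mapIic_apply, Submodule.finrank_map_subtype_eq]
  have e : Projectivization F W ≃ projPoints W :=
    (Projectivization.equivSubmodule F W).trans <|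
      (W.mapIic.toEquiv.subtypeEquiv rank_one_iff).trans <|
        (Equiv.subtypeSubtypeEquivSubtypeInter (· ≤ W) (finrank F · = 1)).trans <|
          Equiv.subtypeEquivRight fun p => by rw [mem_projPoints, and_comm]
  rw [Nat.card_congr e, Nat.card_eq_fintype_card, Fintype.card_coe]

lemma sum_pointDegree (T : Finset (Submodule F V)) (W : Submodule F V) :
    ∑ p ∈ projPoints W, pointDegree T p = ∑ σ ∈ T, #(projPoints (W ⊓ σ)) := by
  classical
  simp only [← filter_le_projPoints]
  exact sum_card_bipartiteAbove_eq_sum_card_bipartiteBelow (· ≤ ·)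

lemma sum_pointDegree_sq (T : Finset (Submodule F V)) (W : Submodule F V) :
    ∑ p ∈ projPoints W, pointDegree T p ^ 2 =
      ∑ π ∈ T, ∑ p ∈ projPoints (W ⊓ π), pointDegree T p := by
  classical
  have degree_sq (p : Submodule F V) :
      pointDegree T p ^ 2 = ∑ π ∈ T, if p ≤ π then pointDegree T p else 0 := by
    rw [← sum_filter, sum_const, smul_eq_mul, sq]
    rfl
  simp only [degree_sq, ← filter_le_projPoints, sum_filter (· ≤ _)]
  exact sum_comm

local notation "q" => Nat.card F

/-- A finite family `T` of hyperplanes of `PG(2n+1,q)`, realised as the projective space of a space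
`V` of rank `2n + 2`, with property (P1⁺): every point lies in `qⁿ(qⁿ - 1)` or in `q²ⁿ` members. -/
structure IsP1PlusFamily (n : ℕ) (T : Finset (Submodule F V)) : Prop where
  finrank_space : finrank F V = 2 * n + 2
  finrank_eq : ∀ π ∈ T, finrank F π = 2 * n + 1
  pointDegree_eq : ∀ p ∈ projPoints ⊤,
    pointDegree T p = q ^ n * (q ^ n - 1) ∨ pointDegree T p = q ^ (2 * n)

/-- The points of the subspace `W` that are black for the family `T`, i.e. lie in exactly
`qⁿ(qⁿ - 1)` of its members. -/
noncomputable def blackPoints (n : ℕ) (T : Finset (Submodule F V)) (W : Submodule F V) :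
    Finset (Submodule F V) :=
  {p ∈ projPoints W | pointDegree T p = q ^ n * (q ^ n - 1)}

lemma coe_blackPoints (n : ℕ) (T : Finset (Submodule F V)) (W : Submodule F V) :
    (blackPoints n T W : Set (Submodule F V)) = {p : Submodule F V | finrank F p = 1 ∧
      {σ ∈ (T : Set (Submodule F V)) | p ≤ σ}.ncard = q ^ n * (q ^ n - 1) ∧ p ≤ W} := by
  ext p
  simp only [ncard_setOf_le_eq_pointDegree, blackPoints, coe_filter, mem_projPoints,
    Set.mem_ofPred_eq]
  tauto

variable [Finite F]

lemma card_projPoints_mul (W : Submodule F V) :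
    (#(projPoints W) * (q - 1) : ℤ) = q ^ finrank F W - 1 := by
  have hcard := Projectivization.card' F W
  rw [← card_projPoints_eq_card_projectivization, natCard_eq_pow_finrank (K := F)] at hcard
  zify [Nat.card_pos (α := F)] at hcard
  linear_combination -hcard

section Hyperplanes

variable {m : ℕ} {T : Finset (Submodule F V)}

lemma sum_pointDegree_top_mul (hT : ∀ π ∈ T, finrank F π = m + 1) :
    ((∑ p ∈ projPoints ⊤, pointDegree T p : ℕ) * (q - 1) : ℤ) = #T * (q ^ (m + 1) - 1) := by
  rw [sum_pointDegree, Nat.cast_sum, sum_mul, ← nsmul_eq_mul, ← sum_const]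
  refine sum_congr rfl fun σ hσ => ?_
  rw [top_inf_eq, card_projPoints_mul, hT σ hσ]

lemma sum_pointDegree_of_mem_mul (hV : finrank F V = m + 2) (hT : ∀ π ∈ T, finrank F π = m + 1)
    {π : Submodule F V} (hπ : π ∈ T) :
    ((∑ p ∈ projPoints π, pointDegree T p : ℕ) * (q - 1) : ℤ) =
      (q ^ (m + 1) - 1) + (#T - 1) * (q ^ m - 1) := by
  classical
  have codim_two : ∀ σ ∈ T.erase π, (#(projPoints (π ⊓ σ)) * (q - 1) : ℤ) = q ^ m - 1 := by
    intro σ hσ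
    obtain ⟨hne, hσT⟩ := mem_erase.1 hσ
    rw [card_projPoints_mul, finrank_inf_of_hyperplanes hV (hT π hπ) (hT σ hσT) hne.symm]
  rw [sum_pointDegree, Nat.cast_sum, sum_mul, ← add_sum_erase _ _ hπ, sum_congr rfl codim_two,
    inf_idem, card_projPoints_mul, hT π hπ, sum_const, nsmul_eq_mul, cast_card_erase_of_mem hπ]

lemma sum_pointDegree_sq_mul (hV : finrank F V = m + 2) (hT : ∀ π ∈ T, finrank F π = m + 1) :
    ((∑ p ∈ projPoints ⊤, pointDegree T p ^ 2 : ℕ) * (q - 1) : ℤ) =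
      #T * ((q ^ (m + 1) - 1) + (#T - 1) * (q ^ m - 1)) := by
  rw [sum_pointDegree_sq, Nat.cast_sum, sum_mul, ← nsmul_eq_mul, ← sum_const]
  refine sum_congr rfl fun π hπ => ?_
  rw [top_inf_eq, sum_pointDegree_of_mem_mul hV hT hπ]

lemma card_quadratic_of_pointDegree_eq_or_eq (hV : finrank F V = m + 2)
    (hT : ∀ π ∈ T, finrank F π = m + 1) {a c : ℤ}
    (hdeg : ∀ p ∈ projPoints ⊤, (pointDegree T p : ℤ) = a ∨ (pointDegree T p : ℤ) = c) :
    (#T * ((q ^ (m + 1) - 1) + (#T - 1) * (q ^ m - 1)) - (a + c) * (#T * (q ^ (m + 1) - 1))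
      + a * c * (q ^ (m + 2) - 1) : ℤ) = 0 := by
  have vanishing : ∑ p ∈ projPoints ⊤, ((pointDegree T p - a) * (pointDegree T p - c) : ℤ) = 0 :=
    sum_eq_zero fun p hp => by rcases hdeg p hp with h | h <;> simp [h]
  have expansion : ∑ p ∈ projPoints ⊤, ((pointDegree T p - a) * (pointDegree T p - c) : ℤ) =
      (∑ p ∈ projPoints ⊤, pointDegree T p ^ 2 : ℕ)
        - (a + c) * (∑ p ∈ projPoints ⊤, pointDegree T p : ℕ)
        + a * c * #(projPoints (⊤ : Submodule F V)) := by
    push_cast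
    rw [mul_sum, ← sum_sub_distrib, mul_comm (a * c), ← nsmul_eq_mul, ← sum_const,
      ← sum_add_distrib]
    exact sum_congr rfl fun p _ => by ring
  have card_top := card_projPoints_mul (⊤ : Submodule F V)
  rw [finrank_top, hV] at card_top
  linear_combination (q - 1 : ℤ) * (vanishing - expansion) - sum_pointDegree_sq_mul hV hT
    + (a + c) * sum_pointDegree_top_mul hT - a * c * card_top

end Hyperplanes

lemma cast_pow_mul_pow_sub_one (n : ℕ) : ((q ^ n * (q ^ n - 1) : ℕ) : ℤ) = q ^ n * (q ^ n - 1) := by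
  rw [Nat.cast_mul, Nat.cast_pred (pow_pos Nat.card_pos n), Nat.cast_pow]

namespace IsP1PlusFamily

variable {n : ℕ} {T : Finset (Submodule F V)}

lemma cast_pointDegree_eq (h : IsP1PlusFamily n T) {p : Submodule F V} (hp : p ∈ projPoints ⊤) :
    (pointDegree T p : ℤ) = q ^ n * (q ^ n - 1) ∨ (pointDegree T p : ℤ) = (q ^ n) ^ 2 := by
  rw [← cast_pow_mul_pow_sub_one, ← pow_mul']
  exact_mod_cast h.pointDegree_eq p hp

lemma cast_card_eq (h : IsP1PlusFamily n T) (hn : 1 ≤ n) :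
    (#T : ℤ) = q ^ n * (q * q ^ n - 1) := by
  have one_lt_q : 1 < q := Finite.one_lt_card
  have q_le_pow : q ≤ q ^ n := Nat.le_self_pow (by lia) q
  refine eq_of_card_quadratic (by exact_mod_cast one_lt_q) (by exact_mod_cast q_le_pow) ?_
  have quadratic :=
    card_quadratic_of_pointDegree_eq_or_eq h.finrank_space h.finrank_eq
      fun _ => h.cast_pointDegree_eq
  linear_combination quadratic

lemma card_blackPoints_mul (h : IsP1PlusFamily n T) (W : Submodule F V) :
    (q ^ n * (#(blackPoints n T W) * (q - 1)) : ℤ) =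
      (q ^ n) ^ 2 * (q ^ finrank F W - 1)
        - (∑ p ∈ projPoints W, pointDegree T p : ℕ) * (q - 1) := by
  have total := sum_const_sub_of_eq_or_eq (s := projPoints W) (f := fun p => (pointDegree T p : ℤ))
    fun _ hp => h.cast_pointDegree_eq (projPoints_subset_top W hp)
  simp only [← cast_pow_mul_pow_sub_one, Nat.cast_inj] at total
  rw [cast_pow_mul_pow_sub_one, sum_sub_distrib, sum_const, nsmul_eq_mul, ← Nat.cast_sum] at total
  rw [blackPoints]
  linear_combination (1 - q : ℤ) * total + (q ^ n) ^ 2 * card_projPoints_mul W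

lemma card_eq (h : IsP1PlusFamily n T) (hn : 1 ≤ n) : #T = q ^ n * (q ^ (n + 1) - 1) := by
  zify [Nat.one_le_pow (n + 1) q Nat.card_pos]
  rw [h.cast_card_eq hn, pow_succ']

lemma card_blackPoints_top (h : IsP1PlusFamily n T) (hn : 1 ≤ n) :
    #(blackPoints n T ⊤) = (q ^ (n + 1) - 1) * (q ^ n + 1) / (q - 1) := by
  refine eq_div_sub_one_of_cast_mul_eq Finite.one_lt_card ?_
  have hQ : (q ^ n : ℤ) ≠ 0 := by exact_mod_cast (pow_pos Nat.card_pos n).ne'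
  have black := h.card_blackPoints_mul ⊤
  rw [finrank_top, h.finrank_space] at black
  have incidences := sum_pointDegree_top_mul h.finrank_eq
  rw [h.cast_card_eq hn] at incidences
  push_cast [Nat.one_le_pow (n + 1) q Nat.card_pos]
  apply mul_left_cancel₀ hQ
  linear_combination black - incidences

lemma card_blackPoints_of_mem (h : IsP1PlusFamily n T) (hn : 1 ≤ n) {π : Submodule F V}
    (hπ : π ∈ T) : #(blackPoints n T π) = (q ^ (2 * n) - 1) / (q - 1) := by
  refine eq_div_sub_one_of_cast_mul_eq Finite.one_lt_card ?_
  have hQ : (q ^ n : ℤ) ≠ 0 := by exact_mod_cast (pow_pos Nat.card_pos n).ne'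
  have black := h.card_blackPoints_mul π
  rw [h.finrank_eq π hπ] at black
  have incidences := sum_pointDegree_of_mem_mul h.finrank_space h.finrank_eq hπ
  rw [h.cast_card_eq hn] at incidences
  push_cast [Nat.one_le_pow (2 * n) q Nat.card_pos]
  apply mul_left_cancel₀ hQ
  linear_combination black - incidences

end IsP1PlusFamily

end Points

theorem stmt_14_general {F V : Type*} [Field F] [Finite F] [AddCommGroup V] [Module F V]
    {n q : ℕ} (hn : 1 ≤ n) (hq : Nat.card F = q) (hV : finrank F V = 2 * n + 2)
    (S : Set (Submodule F V)) (hS : ∀ π ∈ S, finrank F π = 2 * n + 1)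
    (hP1 : ∀ p : Submodule F V, finrank F p = 1 →
      {π ∈ S | p ≤ π}.ncard = q ^ n * (q ^ n - 1) ∨ {π ∈ S | p ≤ π}.ncard = q ^ (2 * n)) :
    S.ncard = q ^ n * (q ^ (n + 1) - 1) ∧
    {p : Submodule F V | finrank F p = 1 ∧
      {π ∈ S | p ≤ π}.ncard = q ^ n * (q ^ n - 1)}.ncard =
        (q ^ (n + 1) - 1) * (q ^ n + 1) / (q - 1) ∧
    ∀ π ∈ S, {p : Submodule F V | finrank F p = 1 ∧
      {σ ∈ S | p ≤ σ}.ncard = q ^ n * (q ^ n - 1) ∧ p ≤ π}.ncard =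
        (q ^ (2 * n) - 1) / (q - 1) := by
  subst hq
  have : FiniteDimensional F V := finite_of_finrank_pos (by lia)
  have : Finite V := Module.finite_of_finite F
  obtain ⟨T, rfl⟩ := S.toFinite.exists_finset_coe
  have hT : IsP1PlusFamily n T :=
    ⟨hV, hS, fun p hp => by
      simpa only [ncard_setOf_le_eq_pointDegree] using hP1 p (mem_projPoints.1 hp).1⟩
  refine ⟨?_, ?_, fun π hπ => ?_⟩
  · rw [Set.ncard_coe_finset, hT.card_eq hn]
  · rw [← hT.card_blackPoints_top hn, ← Set.ncard_coe_finset, coe_blackPoints]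
    simp only [le_top, and_true]
  · rw [← hT.card_blackPoints_of_mem hn hπ, ← Set.ncard_coe_finset, coe_blackPoints]

/-- For `n ≥ 1` and a nonempty family `S` of hyperplanes of `PG(2n+1,q)`
satisfying (P1⁺): `|S| = q^n(q^{n+1}-1)`, the number of black points is
`(q^{n+1}-1)(q^n+1)/(q-1)`, and every hyperplane of `S` contains exactly `(q^{2n}-1)/(q-1)`
black points. -/
theorem stmt_14 (n : ℕ) (hn : 1 ≤ n)
    (F : Type) [Field F] [Fintype F] (q : ℕ) (hq : Fintype.card F = q)
    (S : Set (Submodule F (Fin (2*n+2) → F)))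
    (hS : S.Nonempty)
    (hhyp : ∀ π ∈ S, Module.finrank F π = 2*n+1)
    (hP1 : ∀ p : Submodule F (Fin (2*n+2) → F), Module.finrank F p = 1 →
      {π ∈ S | p ≤ π}.ncard = q^n * (q^n - 1) ∨ {π ∈ S | p ≤ π}.ncard = q^(2*n)) :
    S.ncard = q^n * (q^(n+1) - 1) ∧
    {p : Submodule F (Fin (2*n+2) → F) | Module.finrank F p = 1 ∧
      {π ∈ S | p ≤ π}.ncard = q^n * (q^n - 1)}.ncard = (q^(n+1) - 1) * (q^n + 1) / (q - 1) ∧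
    ∀ π ∈ S,
      {p : Submodule F (Fin (2*n+2) → F) | Module.finrank F p = 1 ∧
        {σ ∈ S | p ≤ σ}.ncard = q^n * (q^n - 1) ∧ p ≤ π}.ncard = (q^(2*n) - 1)/(q - 1) := by
  exact stmt_14_general hn (Nat.card_eq_fintype_card.trans hq) (by simp) S hhyp hP1
end

section
/- Let n ≥ 1 and let Σ be a nonempty family of hyperplanes of PG(2n+1,q) satisfying property (P1^+). Then every hyperplane of PG(2n+1,q) not belonging to Σ contains exactly (q^{2n}+q^{n+1}−q^n−1)/(q−1) black points. -/
/-!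
Count vectors instead of points. Two distinct hyperplanes always meet in codimension `2`, so double
counting gives the first two moments, over all vectors, of the number of members of `S` through a
vector. Since this number takes only the values `a = qⁿ(qⁿ - 1)` and `b = q²ⁿ` off the zero vector,
`∑ (deg v - a)(deg v - b)` reduces to its term at `v = 0`, where `deg 0 = |S|`. This is a quadratic
equation for `|S|`; one root is `qⁿ(qⁿ⁺¹ - 1)` and the other one is not an integer. Knowing `|S|`,
the first moment over a hyperplane outside `S` determines its number of black vectors, hence its
number of black points.
-/

section HyperplaneDegrees

open Module Submodule
open scoped Finset

variable {F V : Type*} [DivisionRing F] [AddCommGroup V] [Module F V]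

theorem finrank_inf_eq_of_finrank_eq_succ_of_ne [FiniteDimensional F V] {m : ℕ}
    (hV : finrank F V = m + 2) {A B : Submodule F V}
    (hA : finrank F A = m + 1) (hB : finrank F B = m + 1) (hAB : A ≠ B) :
    finrank F (A ⊓ B : Submodule F V) = m := by
  have hsum := finrank_sup_add_finrank_inf_eq A B
  have hsup_le : finrank F (A ⊔ B : Submodule F V) ≤ m + 2 := hV ▸ finrank_le _
  have hlt : A < A ⊔ B := left_lt_sup.2 fun hBA =>
    hAB (eq_of_le_of_finrank_eq hBA (hB.trans hA.symm)).symm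
  have := finrank_lt_finrank_of_lt hlt
  omega

theorem card_filter_mem_submodule [Fintype F] [Fintype V] (W : Submodule F V)
    [DecidablePred (· ∈ W)] :
    #{v | v ∈ W} = Fintype.card F ^ finrank F W := by
  rw [← Module.card_eq_pow_finrank (K := F) (V := W), Fintype.card_subtype]

theorem ncard_finrank_one_mul_card_sub_one [Fintype F] [Fintype V] [DecidableEq V]
    (P : Submodule F V → Prop) [DecidablePred P] :
    {p : Submodule F V | finrank F p = 1 ∧ P p}.ncard * (Fintype.card F - 1) =
      #{v : V | v ≠ 0 ∧ P (span F {v})} := by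
  classical
  have hspan (p : Submodule F V) (hp : finrank F p = 1 ∧ P p) (v : V) :
      (v ≠ 0 ∧ P (span F {v})) ∧ span F {v} = p ↔ v ≠ 0 ∧ v ∈ p := by
    constructor
    · rintro ⟨⟨hv, -⟩, rfl⟩
      exact ⟨hv, mem_span_singleton_self v⟩
    · rintro ⟨hv, hvp⟩
      have heq : span F {v} = p := eq_of_le_of_finrank_eq
        ((span_singleton_le_iff_mem v p).2 hvp) ((finrank_span_singleton hv).trans hp.1.symm)
      exact ⟨⟨hv, heq ▸ hp.2⟩, heq⟩
  rw [Set.ncard_eq_toFinset_card', eq_comm]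
  refine (Finset.card_eq_sum_card_fiberwise (f := fun v => span F {v}) fun v hv => ?_).trans
    (Finset.sum_const_nat fun p hp => ?_)
  · rw [SetLike.mem_coe, Finset.mem_filter_univ] at hv
    simpa using ⟨finrank_span_singleton hv.1, hv.2⟩
  · rw [Set.mem_toFinset] at hp
    simp only [Finset.filter_filter, hspan p hp]
    have hcard : #{v | v ∈ p} = Fintype.card F := by
      rw [card_filter_mem_submodule, hp.1, pow_one]
    rw [← hcard, ← Finset.card_erase_of_mem (a := (0 : V)) (by simp)]
    congr 1
    ext v
    simp

variable [∀ W : Submodule F V, DecidablePred (· ∈ W)] {T : Finset (Submodule F V)}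
  {q m : ℕ}

/-- The number of members of `T` containing the vector `v`. For `v ≠ 0` this is the number of
members of `T` through the projective point spanned by `v`; at `v = 0` it is `#T`. -/
def incidenceDegree (T : Finset (Submodule F V)) (v : V) : ℕ := #{σ ∈ T | v ∈ σ}

theorem incidenceDegree_zero (T : Finset (Submodule F V)) : incidenceDegree T 0 = #T := by
  simp [incidenceDegree]

theorem ncard_span_singleton_le_eq_incidenceDegree (T : Finset (Submodule F V)) (v : V) :
    {σ ∈ (T : Set (Submodule F V)) | span F {v} ≤ σ}.ncard = incidenceDegree T v := by
  rw [incidenceDegree, ← Set.ncard_coe_finset, Finset.coe_filter]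
  simp only [SetLike.mem_coe, span_singleton_le_iff_mem]

theorem sum_incidenceDegree_sq [Fintype V] (T : Finset (Submodule F V)) :
    ∑ v, incidenceDegree T v ^ 2 = ∑ σ ∈ T, ∑ v with v ∈ σ, incidenceDegree T v := by
  have hsq (v : V) : incidenceDegree T v ^ 2 = ∑ σ ∈ T with v ∈ σ, incidenceDegree T v := by
    rw [Finset.sum_const, smul_eq_mul, sq, ← incidenceDegree]
  simp only [hsq]
  exact Finset.sum_comm' (by simp [and_comm])

variable [Fintype F]

section Moments

variable [Fintype V]

theorem sum_mem_incidenceDegree (T : Finset (Submodule F V)) (W : Submodule F V) :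
    ∑ v with v ∈ W, incidenceDegree T v = ∑ σ ∈ T, Fintype.card F ^ finrank F ↥(W ⊓ σ) := by
  simp only [← card_filter_mem_submodule, mem_inf, ← Finset.filter_filter]
  exact Finset.sum_card_bipartiteAbove_eq_sum_card_bipartiteBelow _

theorem sum_mem_incidenceDegree_of_notMem (hq : Fintype.card F = q) (hV : finrank F V = m + 2)
    (hT : ∀ σ ∈ T, finrank F σ = m + 1) {π : Submodule F V} (hπ : finrank F π = m + 1)
    (hπT : π ∉ T) :
    ∑ v with v ∈ π, incidenceDegree T v = #T * q ^ m := by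
  rw [sum_mem_incidenceDegree, hq, Finset.sum_const_nat]
  intro σ hσ
  rw [finrank_inf_eq_of_finrank_eq_succ_of_ne hV hπ (hT σ hσ) (ne_of_mem_of_not_mem hσ hπT).symm]

theorem sum_mem_incidenceDegree_of_mem (hq : Fintype.card F = q) (hV : finrank F V = m + 2)
    (hT : ∀ σ ∈ T, finrank F σ = m + 1) {π : Submodule F V} (hπT : π ∈ T) :
    ∑ v with v ∈ π, incidenceDegree T v = q ^ (m + 1) + (#T - 1) * q ^ m := by
  classical
  rw [sum_mem_incidenceDegree, hq, ← Finset.add_sum_erase _ _ hπT, inf_idem, hT π hπT,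
    Finset.sum_const_nat, Finset.card_erase_of_mem hπT]
  intro σ hσ
  rw [finrank_inf_eq_of_finrank_eq_succ_of_ne hV (hT π hπT) (hT σ (Finset.mem_of_mem_erase hσ))
    (Finset.ne_of_mem_erase hσ).symm]

theorem sum_incidenceDegree_of_finrank_eq (hq : Fintype.card F = q)
    (hT : ∀ σ ∈ T, finrank F σ = m) :
    ∑ v, incidenceDegree T v = #T * q ^ m := by
  have h := sum_mem_incidenceDegree T ⊤
  simp only [mem_top, Finset.filter_true, hq] at h
  rw [h, Finset.sum_const_nat fun σ hσ => by rw [top_inf_eq, hT σ hσ]]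

theorem sum_incidenceDegree_sq_of_hyperplanes (hq : Fintype.card F = q)
    (hV : finrank F V = m + 2) (hT : ∀ σ ∈ T, finrank F σ = m + 1) :
    ∑ v, incidenceDegree T v ^ 2 = #T * (q ^ (m + 1) + (#T - 1) * q ^ m) := by
  rw [sum_incidenceDegree_sq, Finset.sum_const_nat]
  exact fun σ hσ => sum_mem_incidenceDegree_of_mem hq hV hT hσ

end Moments

theorem card_sub_mul_card_sub_of_two_degrees [Finite V] (hq : Fintype.card F = q)
    (hV : finrank F V = m + 2) (hT : ∀ σ ∈ T, finrank F σ = m + 1) {a b : ℕ}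
    (hdeg : ∀ v ≠ 0, incidenceDegree T v = a ∨ incidenceDegree T v = b) :
    ((#T : ℤ) - a) * (#T - b) =
      #T * (q ^ (m + 1) + (#T - 1) * q ^ m) - (a + b) * (#T * q ^ (m + 1))
        + a * b * q ^ (m + 2) := by
  have := Fintype.ofFinite V
  have hcard : (Fintype.card V : ℤ) = q ^ (m + 2) := by
    rw [Module.card_eq_pow_finrank (K := F), hV, hq, Nat.cast_pow]
  have hfirst : ∑ v, (incidenceDegree T v : ℤ) = #T * q ^ (m + 1) := by
    exact_mod_cast sum_incidenceDegree_of_finrank_eq hq hT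
  have hsecond : ∑ v, (incidenceDegree T v : ℤ) ^ 2 =
      #T * (q ^ (m + 1) + (#T - 1) * q ^ m) := by
    have h := congrArg (Nat.cast (R := ℤ)) (sum_incidenceDegree_sq_of_hyperplanes hq hV hT)
    rcases T.eq_empty_or_nonempty with rfl | hne
    · simpa using h
    · simpa [Nat.cast_pred hne.card_pos] using h
  calc ((#T : ℤ) - a) * (#T - b)
      = ∑ v, ((incidenceDegree T v : ℤ) - a) * (incidenceDegree T v - b) := by
        rw [Fintype.sum_eq_single 0, incidenceDegree_zero]
        intro v hv
        rcases hdeg v hv with h | h <;> simp [h]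
    _ = ∑ v, ((incidenceDegree T v : ℤ) ^ 2 - (a + b) * incidenceDegree T v + a * b) :=
        Finset.sum_congr rfl fun v _ => by ring
    _ = #T * (q ^ (m + 1) + (#T - 1) * q ^ m) - (a + b) * (#T * q ^ (m + 1))
          + a * b * q ^ (m + 2) := by
        rw [Finset.sum_add_distrib, Finset.sum_sub_distrib, ← Finset.mul_sum, Finset.sum_const,
          Finset.card_univ, nsmul_eq_mul, hcard, hfirst, hsecond]
        ring

theorem sub_mul_card_degree_eq_of_notMem [Fintype V] [DecidableEq V]
    (hq : Fintype.card F = q) (hV : finrank F V = m + 2)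
    (hT : ∀ σ ∈ T, finrank F σ = m + 1) {a b : ℕ}
    (hdeg : ∀ v ≠ 0, incidenceDegree T v = a ∨ incidenceDegree T v = b)
    {π : Submodule F V} (hπ : finrank F π = m + 1) (hπT : π ∉ T) :
    ((b : ℤ) - a) * #{v | v ≠ 0 ∧ incidenceDegree T v = a ∧ v ∈ π} =
      b * (q ^ (m + 1) - 1) - #T * (q ^ m - 1) := by
  have hcard : (#{v | v ∈ π} : ℤ) = q ^ (m + 1) := by
    rw [card_filter_mem_submodule, hπ, hq, Nat.cast_pow]
  have hfirst : ∑ v with v ∈ π, (incidenceDegree T v : ℤ) = #T * q ^ m := by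
    exact_mod_cast sum_mem_incidenceDegree_of_notMem hq hV hT hπ hπT
  have hsplit : ∑ v with v ∈ π, ((b : ℤ) - incidenceDegree T v) =
      (b - #T) + ∑ v with v ≠ 0 ∧ incidenceDegree T v = a ∧ v ∈ π, ((b : ℤ) - a) := by
    rw [← Finset.add_sum_erase _ _ (by simp : (0 : V) ∈ ({v | v ∈ π} : Finset V)),
      incidenceDegree_zero]
    congr 1
    symm
    apply Finset.sum_subset_zero_on_sdiff
    · intro v
      simp +contextual
    · simp only [Finset.mem_sdiff, Finset.mem_erase, Finset.mem_filter_univ]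
      rintro v ⟨⟨hv, hvπ⟩, hva⟩
      have hvb := (hdeg v hv).resolve_left fun h => hva ⟨hv, h, hvπ⟩
      rw [hvb, sub_self]
    · simp +contextual
  rw [Finset.sum_sub_distrib, Finset.sum_const, Finset.sum_const, hfirst, nsmul_eq_mul,
    nsmul_eq_mul, hcard] at hsplit
  linear_combination -hsplit

theorem eq_mul_sub_one_of_quadratic {q Q s : ℤ} (hq : 2 ≤ q) (hqQ : q ≤ Q)
    (h : (s - Q * (Q - 1)) * (s - Q ^ 2) =
      s * (Q ^ 2 * q + (s - 1) * Q ^ 2) - (Q * (Q - 1) + Q ^ 2) * (s * (Q ^ 2 * q))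
        + Q * (Q - 1) * Q ^ 2 * (Q ^ 2 * q ^ 2)) :
    s = Q * (q * Q - 1) := by
  have hfactor : (Q - 1) * ((s - Q * (q * Q - 1)) * ((Q + 1) * s - Q ^ 2 * (q * Q + 1))) = 0 := by
    linear_combination -h
  -- Modulo `Q + 1` the numerator of the second root is `1 - q`.
  have hother : (Q + 1) * s - Q ^ 2 * (q * Q + 1) ≠ 0 := fun h0 => by
    have hdvd : Q + 1 ∣ q - 1 :=
      ⟨q * Q ^ 2 - (q - 1) * Q + (q - 1) - s, by linear_combination h0⟩
    have := Int.le_of_dvd (by omega) hdvd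
    omega
  simpa [hother, sub_eq_zero, show Q ≠ 1 by omega] using hfactor

theorem card_eq_of_incidenceDegree [Finite V] {n : ℕ}
    (hn : 1 ≤ n) (hq : Fintype.card F = q) (hV : finrank F V = 2 * n + 2)
    (hT : ∀ σ ∈ T, finrank F σ = 2 * n + 1)
    (hdeg : ∀ v ≠ 0,
      incidenceDegree T v = q ^ n * (q ^ n - 1) ∨ incidenceDegree T v = q ^ (2 * n)) :
    (#T : ℤ) = q ^ n * (q * q ^ n - 1) := by
  have hq2 : 2 ≤ q := hq ▸ Fintype.one_lt_card
  have hqQ : q ≤ q ^ n := Nat.le_self_pow (by omega) q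
  have hquad := card_sub_mul_card_sub_of_two_degrees hq hV hT hdeg
  push_cast [Nat.cast_sub (show 1 ≤ q ^ n by omega)] at hquad
  refine eq_mul_sub_one_of_quadratic (by exact_mod_cast hq2) (by exact_mod_cast hqQ) ?_
  linear_combination hquad

theorem card_black_vectors_eq [Fintype V] [DecidableEq V] {n : ℕ}
    (hn : 1 ≤ n) (hq : Fintype.card F = q) (hV : finrank F V = 2 * n + 2)
    (hT : ∀ σ ∈ T, finrank F σ = 2 * n + 1)
    (hdeg : ∀ v ≠ 0,
      incidenceDegree T v = q ^ n * (q ^ n - 1) ∨ incidenceDegree T v = q ^ (2 * n))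
    {π : Submodule F V} (hπ : finrank F π = 2 * n + 1) (hπT : π ∉ T) :
    #{v | v ≠ 0 ∧ incidenceDegree T v = q ^ n * (q ^ n - 1) ∧ v ∈ π} =
      q ^ (2 * n) + q ^ (n + 1) - q ^ n - 1 := by
  have hQ : 0 < q ^ n := pow_pos (hq ▸ Fintype.card_pos) n
  have hcount := sub_mul_card_degree_eq_of_notMem hq hV hT hdeg hπ hπT
  rw [card_eq_of_incidenceDegree hn hq hV hT hdeg] at hcount
  set k := #{v | v ≠ 0 ∧ incidenceDegree T v = q ^ n * (q ^ n - 1) ∧ v ∈ π}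
  push_cast [Nat.cast_sub (show 1 ≤ q ^ n from hQ)] at hcount
  have hk : (k : ℤ) + 1 + q ^ n = q ^ (2 * n) + q ^ (n + 1) := by
    refine mul_left_cancel₀ (a := (q : ℤ) ^ n) (by exact_mod_cast hQ.ne') ?_
    linear_combination hcount
  have : k + 1 + q ^ n = q ^ (2 * n) + q ^ (n + 1) := by exact_mod_cast hk
  omega

end HyperplaneDegrees

theorem stmt_17_general {n : ℕ} (hn : 1 ≤ n) {F V : Type*} [Field F] [Fintype F]
    [AddCommGroup V] [Module F V] (hV : Module.finrank F V = 2 * n + 2)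
    {q : ℕ} (hq : Fintype.card F = q) {S : Set (Submodule F V)}
    (hS : ∀ σ ∈ S, Module.finrank F σ = 2 * n + 1)
    (hdeg : ∀ p : Submodule F V, Module.finrank F p = 1 →
      {σ ∈ S | p ≤ σ}.ncard = q ^ n * (q ^ n - 1) ∨ {σ ∈ S | p ≤ σ}.ncard = q ^ (2 * n))
    {π : Submodule F V} (hπ : Module.finrank F π = 2 * n + 1) (hπS : π ∉ S) :
    {p : Submodule F V | Module.finrank F p = 1 ∧
      {σ ∈ S | p ≤ σ}.ncard = q ^ n * (q ^ n - 1) ∧ p ≤ π}.ncard =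
      (q ^ (2 * n) + q ^ (n + 1) - q ^ n - 1) / (q - 1) := by
  classical
  have : FiniteDimensional F V := Module.finite_of_finrank_pos (by omega)
  have : Finite V := Module.finite_of_finite F
  have := Fintype.ofFinite V
  have hq2 : 2 ≤ q := hq ▸ Fintype.one_lt_card
  lift S to Finset (Submodule F V) using S.toFinite
  have hdeg' (v : V) (hv : v ≠ 0) : incidenceDegree S v = q ^ n * (q ^ n - 1) ∨
      incidenceDegree S v = q ^ (2 * n) := by
    simpa only [ncard_span_singleton_le_eq_incidenceDegree] using
      hdeg _ (finrank_span_singleton hv)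
  have hpoints := ncard_finrank_one_mul_card_sub_one fun p : Submodule F V =>
    {σ ∈ (S : Set (Submodule F V)) | p ≤ σ}.ncard = q ^ n * (q ^ n - 1) ∧ p ≤ π
  simp_rw [ncard_span_singleton_le_eq_incidenceDegree, Submodule.span_singleton_le_iff_mem]
    at hpoints
  rw [card_black_vectors_eq hn hq hV hS hdeg' hπ hπS, hq] at hpoints
  exact Nat.eq_div_of_mul_eq_left (by omega) hpoints

/-- For `n ≥ 1` and a nonempty family `S` of hyperplanes of `PG(2n+1,q)`
satisfying (P1⁺), every hyperplane of `PG(2n+1,q)` not in `S` contains exactly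
`(q^{2n}+q^{n+1}-q^n-1)/(q-1)` black points. -/
theorem stmt_17 (n : ℕ) (hn : 1 ≤ n)
    (F : Type) [Field F] [Fintype F] (q : ℕ) (hq : Fintype.card F = q)
    (S : Set (Submodule F (Fin (2*n+2) → F)))
    (hS : S.Nonempty)
    (hhyp : ∀ π ∈ S, Module.finrank F π = 2*n+1)
    (hP1 : ∀ p : Submodule F (Fin (2*n+2) → F), Module.finrank F p = 1 →
      {π ∈ S | p ≤ π}.ncard = q^n * (q^n - 1) ∨ {π ∈ S | p ≤ π}.ncard = q^(2*n)) :
    ∀ π : Submodule F (Fin (2*n+2) → F), Module.finrank F π = 2*n+1 → π ∉ S →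
      {p : Submodule F (Fin (2*n+2) → F) | Module.finrank F p = 1 ∧
        {σ ∈ S | p ≤ σ}.ncard = q^n * (q^n - 1) ∧ p ≤ π}.ncard
        = (q^(2*n) + q^(n+1) - q^n - 1)/(q - 1) :=
  fun _ hπ hπS => stmt_17_general hn (Module.finrank_fin_fun F) hq hhyp hP1 hπ hπS
end
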